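/- Let N ≥ 1, p, q ≥ 0 with pq > 1, and set r₁* = (N/2)(pq−1)/(p+1), r₂* = (N/2)(pq−1)/(q+1). Let ℓ* ≥ 1 satisfy ℓ* · min{r₁*, r₂*} ≥ 1. Let 0 < T < ∞ and let (u,v) be the minimal solution of the system (S) on ℝ^N × (0,T), and assume limsup_{t→T} ( ‖u(t)‖_{L^∞(ℝ^N)} + ‖v(t)‖_{L^∞(ℝ^N)} ) = ∞. Set ρ(t) = (T−t)^{1/2}. Then for every r₁ ∈ (ℓ* r₁*, ∞] and r₂ ∈ (ℓ* r₂*, ∞] there exists a constant c₂ > 0 such that limsup_{t→T} (T−t)^{(p+1)/(pq−1) − N/(2r₁)} |||u(t)|||_{r₁,ρ(t)} ≥ c₂ and limsup_{t→T} (T−t)^{(q+1)/(pq−1) − N/(2r₂)} |||v(t)|||_{r₂,ρ(t)} ≥ c₂, where 1/∞ is interpreted as 0. -/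

import Mathlib

open MeasureTheory ENNReal Filter

noncomputable section

/-- Euclidean space `ℝ^N`. -/
abbrev Euc (N : ℕ) := EuclideanSpace ℝ (Fin N)

/-- The heat semigroup applied to a (nonnegative) function `φ` on `ℝ^N`, with values in `[0,∞]`:
`[S(t)φ](x) = ∫ (4πt)^{-N/2} exp(-|x-y|²/(4t)) φ(y) dy`. -/
noncomputable def heatS (N : ℕ) (t : ℝ) (φ : Euc N → ℝ) (x : Euc N) : ℝ≥0∞ :=
  ∫⁻ y, ENNReal.ofReal
    ((4 * Real.pi * t) ^ (-(N : ℝ) / 2) * Real.exp (-‖x - y‖ ^ 2 / (4 * t)) * φ y)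

/-- The `L^∞` norm of `S(t)φ` on `ℝ^N`. -/
noncomputable def heatSup (N : ℕ) (t : ℝ) (φ : Euc N → ℝ) : ℝ≥0∞ :=
  essSup (heatS N t φ) volume

/-- The `L^{r,∞}(E)` quasinorm: for `1 < r < ∞` it is
`sup_{λ>0} λ |{x ∈ E : |f x| > λ}|^{1/r}`; for `r = 1` (resp. `r = ∞`)
it is the usual `L¹(E)` (resp. `L^∞(E)`) norm. -/
noncomputable def wnorm (N : ℕ) (r : ℝ≥0∞) (f : Euc N → ℝ) (E : Set (Euc N)) : ℝ≥0∞ :=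
  if r = 1 then ∫⁻ x in E, ENNReal.ofReal |f x|
  else if r = ⊤ then essSup (fun x => ENNReal.ofReal |f x|) (volume.restrict E)
  else ⨆ (l : ℝ) (_ : 0 < l), ENNReal.ofReal l * (volume {x ∈ E | l < |f x|}) ^ (1 / r.toReal)

/-- The uniformly local quasinorm `|||f|||_{r,ρ} = sup_x ‖f‖_{L^{r,∞}(B(x,ρ))}`
(for `r = ∞` it is the `L^∞(ℝ^N)` norm). -/
noncomputable def ulocNorm (N : ℕ) (r : ℝ≥0∞) (ρ : ℝ) (f : Euc N → ℝ) : ℝ≥0∞ :=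
  if r = ⊤ then essSup (fun x => ENNReal.ofReal |f x|) volume
  else ⨆ x : Euc N, wnorm N r f (Metric.ball x ρ)

/-- `u ∈ L^∞(τ, T-τ; L^∞(ℝ^N))` for every `τ ∈ (0, T/2)`. -/
def LocBdd (N : ℕ) (T : ℝ≥0∞) (u : Euc N → ℝ → ℝ) : Prop :=
  ∀ τ : ℝ, 0 < τ → ENNReal.ofReal (2 * τ) < T →
    ∃ M : ℝ, ∀ t : ℝ, τ ≤ t → ENNReal.ofReal (t + τ) ≤ T →
      ∀ᵐ x ∂(volume : Measure (Euc N)), |u x t| ≤ M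

/-- Regularity requirements on a pair `(u,v)`: nonnegativity, joint measurability and
uniform boundedness away from `t = 0` and `t = T`. -/
def PairRegular (N : ℕ) (T : ℝ≥0∞) (u v : Euc N → ℝ → ℝ) : Prop :=
  (∀ x t, 0 ≤ u x t) ∧ (∀ x t, 0 ≤ v x t) ∧
  Measurable (Function.uncurry u) ∧ Measurable (Function.uncurry v) ∧
  LocBdd N T u ∧ LocBdd N T v

/-- The Duhamel identities for the system (S) `∂ₜu = Δu + v^p`, `∂ₜv = Δv + u^q` at time `t`. -/
def DuhamelSys (N : ℕ) (p q : ℝ) (u₀ v₀ : Euc N → ℝ) (u v : Euc N → ℝ → ℝ) (t : ℝ) : Prop :=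
  (∀ᵐ x ∂(volume : Measure (Euc N)), ENNReal.ofReal (u x t) =
      heatS N t u₀ x + ∫⁻ s in Set.Ioo 0 t, heatS N (t - s) (fun y => v y s ^ p) x) ∧
  (∀ᵐ x ∂(volume : Measure (Euc N)), ENNReal.ofReal (v x t) =
      heatS N t v₀ x + ∫⁻ s in Set.Ioo 0 t, heatS N (t - s) (fun y => u y s ^ q) x)

/-- The Duhamel inequalities (`≥`, with finite left-hand side) for the system (S) at time `t`. -/
def DuhamelSuperSys (N : ℕ) (p q : ℝ) (u₀ v₀ : Euc N → ℝ) (u v : Euc N → ℝ → ℝ) (t : ℝ) : Prop :=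
  (∀ᵐ x ∂(volume : Measure (Euc N)),
      heatS N t u₀ x + (∫⁻ s in Set.Ioo 0 t, heatS N (t - s) (fun y => v y s ^ p) x) ≤
        ENNReal.ofReal (u x t)) ∧
  (∀ᵐ x ∂(volume : Measure (Euc N)),
      heatS N t v₀ x + (∫⁻ s in Set.Ioo 0 t, heatS N (t - s) (fun y => u y s ^ q) x) ≤
        ENNReal.ofReal (v x t))

/-- `(u,v)` is a solution of the system (S) on `ℝ^N × (0,T)`. -/
def IsSolSys (N : ℕ) (p q : ℝ) (u₀ v₀ : Euc N → ℝ) (T : ℝ≥0∞) (u v : Euc N → ℝ → ℝ) : Prop :=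
  PairRegular N T u v ∧
  ∀ t : ℝ, 0 < t → ENNReal.ofReal t < T → DuhamelSys N p q u₀ v₀ u v t

/-- `(u,v)` is a supersolution of the system (S) on `ℝ^N × (0,T)`. -/
def IsSuperSys (N : ℕ) (p q : ℝ) (u₀ v₀ : Euc N → ℝ) (T : ℝ≥0∞) (u v : Euc N → ℝ → ℝ) : Prop :=
  PairRegular N T u v ∧
  ∀ t : ℝ, 0 < t → ENNReal.ofReal t < T → DuhamelSuperSys N p q u₀ v₀ u v t

/-- `(u,v)` is the minimal solution of the system (S) on `ℝ^N × (0,T)`. -/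
def IsMinSolSys (N : ℕ) (p q : ℝ) (u₀ v₀ : Euc N → ℝ) (T : ℝ≥0∞)
    (u v : Euc N → ℝ → ℝ) : Prop :=
  IsSolSys N p q u₀ v₀ T u v ∧
  ∀ u' v' : Euc N → ℝ → ℝ, IsSolSys N p q u₀ v₀ T u' v' →
    ∀ t : ℝ, 0 < t → ENNReal.ofReal t < T →
      (∀ᵐ x ∂(volume : Measure (Euc N)), u x t ≤ u' x t) ∧
      (∀ᵐ x ∂(volume : Measure (Euc N)), v x t ≤ v' x t)

/-- Regularity requirements on a scalar function `w`. -/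
def ScalarRegular (N : ℕ) (T : ℝ≥0∞) (w : Euc N → ℝ → ℝ) : Prop :=
  (∀ x t, 0 ≤ w x t) ∧ Measurable (Function.uncurry w) ∧ LocBdd N T w

/-- The Duhamel identity for the scalar problem (E) `∂ₜw = Δw + α w^A + β w^B` at time `t`. -/
def DuhamelScalar (N : ℕ) (α β A B : ℝ) (w₀ : Euc N → ℝ) (w : Euc N → ℝ → ℝ) (t : ℝ) : Prop :=
  ∀ᵐ x ∂(volume : Measure (Euc N)), ENNReal.ofReal (w x t) =
    heatS N t w₀ x +
      ∫⁻ s in Set.Ioo 0 t, heatS N (t - s) (fun y => α * w y s ^ A + β * w y s ^ B) x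

/-- The Duhamel inequality (`≥`, with finite left-hand side) for the scalar problem (E). -/
def DuhamelSuperScalar (N : ℕ) (α β A B : ℝ) (w₀ : Euc N → ℝ) (w : Euc N → ℝ → ℝ)
    (t : ℝ) : Prop :=
  ∀ᵐ x ∂(volume : Measure (Euc N)),
    heatS N t w₀ x +
        (∫⁻ s in Set.Ioo 0 t, heatS N (t - s) (fun y => α * w y s ^ A + β * w y s ^ B) x) ≤
      ENNReal.ofReal (w x t)

/-- `w` is a solution of the scalar problem (E) on `ℝ^N × (0,T)`. -/
def IsSolScalar (N : ℕ) (α β A B : ℝ) (w₀ : Euc N → ℝ) (T : ℝ≥0∞)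
    (w : Euc N → ℝ → ℝ) : Prop :=
  ScalarRegular N T w ∧
  ∀ t : ℝ, 0 < t → ENNReal.ofReal t < T → DuhamelScalar N α β A B w₀ w t

/-- `w` is a supersolution of the scalar problem (E) on `ℝ^N × (0,T)`. -/
def IsSuperScalar (N : ℕ) (α β A B : ℝ) (w₀ : Euc N → ℝ) (T : ℝ≥0∞)
    (w : Euc N → ℝ → ℝ) : Prop :=
  ScalarRegular N T w ∧
  ∀ t : ℝ, 0 < t → ENNReal.ofReal t < T → DuhamelSuperScalar N α β A B w₀ w t

/-- The Duhamel identities for the strongly coupled system (SC)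
`∂ₜu = Δu + u^{p₁} v^{p₂}`, `∂ₜv = Δv + u^{q₁} v^{q₂}` at time `t`. -/
def DuhamelSC (N : ℕ) (p₁ p₂ q₁ q₂ : ℝ) (u₀ v₀ : Euc N → ℝ) (u v : Euc N → ℝ → ℝ)
    (t : ℝ) : Prop :=
  (∀ᵐ x ∂(volume : Measure (Euc N)), ENNReal.ofReal (u x t) =
      heatS N t u₀ x +
        ∫⁻ s in Set.Ioo 0 t, heatS N (t - s) (fun y => u y s ^ p₁ * v y s ^ p₂) x) ∧
  (∀ᵐ x ∂(volume : Measure (Euc N)), ENNReal.ofReal (v x t) =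
      heatS N t v₀ x +
        ∫⁻ s in Set.Ioo 0 t, heatS N (t - s) (fun y => u y s ^ q₁ * v y s ^ q₂) x)

/-- `(u,v)` is a solution of the strongly coupled system (SC) on `ℝ^N × (0,T)`. -/
def IsSolSC (N : ℕ) (p₁ p₂ q₁ q₂ : ℝ) (u₀ v₀ : Euc N → ℝ) (T : ℝ≥0∞)
    (u v : Euc N → ℝ → ℝ) : Prop :=
  PairRegular N T u v ∧
  ∀ t : ℝ, 0 < t → ENNReal.ofReal t < T → DuhamelSC N p₁ p₂ q₁ q₂ u₀ v₀ u v t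

/-- Heat kernel with values in `[0,∞]`. -/
def hk (N : ℕ) (t : ℝ) (z : Euc N) : ℝ≥0∞ :=
  ENNReal.ofReal ((4 * Real.pi * t) ^ (-(N : ℝ) / 2) * Real.exp (-‖z‖ ^ 2 / (4 * t)))

/-- Heat semigroup on `[0,∞]`-valued functions. -/
def HS (N : ℕ) (t : ℝ) (g : Euc N → ℝ≥0∞) (x : Euc N) : ℝ≥0∞ :=
  ∫⁻ y, hk N t (x - y) * g y

lemma heatS_eq (N : ℕ) {t : ℝ} (ht : 0 < t) (φ : Euc N → ℝ) (x : Euc N) :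
    heatS N t φ x = HS N t (fun y => ENNReal.ofReal (φ y)) x := by
  unfold heatS HS hk
  refine lintegral_congr fun y => ?_
  rw [ENNReal.ofReal_mul]
  positivity

lemma hk_meas (N : ℕ) : Measurable (fun z : ℝ × Euc N => hk N z.1 z.2) := by
  unfold hk
  fun_prop

lemma hk_meas' (N : ℕ) (t : ℝ) : Measurable (hk N t) := by
  unfold hk
  fun_prop

lemma gauss_lint (N : ℕ) {b : ℝ} (hb : 0 < b) (w : Euc N) :
    ∫⁻ y : Euc N, ENNReal.ofReal (Real.exp (-b * ‖y - w‖ ^ 2)) =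
      ENNReal.ofReal ((Real.pi / b) ^ ((N : ℝ) / 2)) := by
  rw [lintegral_sub_right_eq_self (fun y : Euc N => ENNReal.ofReal (Real.exp (-b * ‖y‖ ^ 2))) w]
  have h := GaussianFourier.integral_rexp_neg_mul_sq_norm (V := Euc N) hb
  rw [← ofReal_integral_eq_lintegral_ofReal, h]
  · simp
  · by_contra hc
    rw [integral_undef hc] at h
    have : 0 < (Real.pi / b) ^ ((Module.finrank ℝ (Euc N) : ℝ) / 2) := by positivity
    linarith
  · exact Eventually.of_forall fun y => (Real.exp_pos _).le

lemma hk_int (N : ℕ) {t : ℝ} (ht : 0 < t) (x : Euc N) : ∫⁻ y, hk N t (x - y) = 1 := by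
  unfold hk
  have : ∀ y : Euc N, ENNReal.ofReal ((4 * Real.pi * t) ^ (-(N : ℝ) / 2) * Real.exp (-‖x - y‖ ^ 2 / (4 * t)))
      = ENNReal.ofReal ((4 * Real.pi * t) ^ (-(N : ℝ) / 2)) * ENNReal.ofReal (Real.exp (-(1/(4*t)) * ‖y - x‖ ^ 2)) := by
    intro y
    rw [ENNReal.ofReal_mul (by positivity), norm_sub_rev]
    congr 3
    field_simp
  simp_rw [this]
  rw [lintegral_const_mul' _ _ ENNReal.ofReal_ne_top, gauss_lint N (by positivity),
    ← ENNReal.ofReal_mul (by positivity)]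
  have h2 : Real.pi / (1 / (4 * t)) = 4 * Real.pi * t := by field_simp
  rw [h2, ← Real.rpow_add (by positivity)]
  ring_nf
  simp

lemma hk_semi (N : ℕ) {s t : ℝ} (hs : 0 < s) (ht : 0 < t) (x z : Euc N) :
    ∫⁻ y, hk N t (x - y) * hk N s (y - z) = hk N (t + s) (x - z) := by
  unfold hk
  set w : Euc N := (s / (t + s)) • x + (t / (t + s)) • z with hw
  have hsq : ∀ y : Euc N, -‖x - y‖ ^ 2 / (4 * t) + -‖y - z‖ ^ 2 / (4 * s) =
      -‖x - z‖ ^ 2 / (4 * (t + s)) + -((t + s) / (4 * t * s)) * ‖y - w‖ ^ 2 := by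
    intro y
    have e1 : x - z = (x - y) + (y - z) := by abel
    have e2 : y - w = (t / (t + s)) • (y - z) - (s / (t + s)) • (x - y) := by
      have h1 : s / (t + s) + t / (t + s) = 1 := by field_simp; ring
      have : y = (s / (t + s)) • y + (t / (t + s)) • y := by rw [← add_smul, h1, one_smul]
      rw [hw]
      nth_rewrite 1 [this]
      simp only [smul_sub]
      abel
    rw [e1, e2, norm_add_sq_real (x - y) (y - z),
      norm_sub_sq_real ((t / (t + s)) • (y - z)) ((s / (t + s)) • (x - y)), norm_smul, norm_smul, inner_smul_left, inner_smul_right,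
      real_inner_comm (x - y) (y - z)]
    simp only [Real.norm_eq_abs, mul_pow, sq_abs, conj_trivial]
    field_simp
    ring
  have : ∀ y : Euc N, ENNReal.ofReal ((4 * Real.pi * t) ^ (-(N : ℝ) / 2) * Real.exp (-‖x - y‖ ^ 2 / (4 * t))) *
      ENNReal.ofReal ((4 * Real.pi * s) ^ (-(N : ℝ) / 2) * Real.exp (-‖y - z‖ ^ 2 / (4 * s)))
      = ENNReal.ofReal ((4 * Real.pi * t) ^ (-(N : ℝ) / 2) * (4 * Real.pi * s) ^ (-(N : ℝ) / 2) *
         Real.exp (-‖x - z‖ ^ 2 / (4 * (t + s)))) * ENNReal.ofReal (Real.exp (-((t + s) / (4 * t * s)) * ‖y - w‖ ^ 2)) := by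
    intro y
    rw [← ENNReal.ofReal_mul (by positivity), ← ENNReal.ofReal_mul (by positivity)]
    congr 1
    have := congrArg Real.exp (hsq y)
    rw [Real.exp_add, Real.exp_add] at this
    linear_combination (4 * Real.pi * t) ^ (-(N : ℝ) / 2) * (4 * Real.pi * s) ^ (-(N : ℝ) / 2) * this
  simp_rw [this]
  rw [lintegral_const_mul' _ _ ENNReal.ofReal_ne_top, gauss_lint N (by positivity),
    ← ENNReal.ofReal_mul (by positivity)]
  congr 1
  have h2 : Real.pi / ((t + s) / (4 * t * s)) = (4 * Real.pi * t) * (4 * Real.pi * s) / (4 * Real.pi * (t + s)) := by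
    field_simp
  have e : -(N:ℝ)/2 = -((N:ℝ)/2) := by ring
  rw [h2, Real.div_rpow (by positivity) (by positivity),
    Real.mul_rpow (x := 4 * Real.pi * t) (y := 4 * Real.pi * s) (by positivity) (by positivity), e,
    Real.rpow_neg (by positivity), Real.rpow_neg (by positivity), Real.rpow_neg (by positivity)]
  have p1 : 0 < (4 * Real.pi * t) ^ ((N:ℝ)/2) := by positivity
  have p2 : 0 < (4 * Real.pi * s) ^ ((N:ℝ)/2) := by positivity
  have p3 : 0 < (4 * Real.pi * (t+s)) ^ ((N:ℝ)/2) := by positivity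
  generalize (4 * Real.pi * t) ^ ((N:ℝ)/2) = a1 at *
  generalize (4 * Real.pi * s) ^ ((N:ℝ)/2) = a2 at *
  generalize (4 * Real.pi * (t+s)) ^ ((N:ℝ)/2) = a3 at *
  field_simp

lemma HS_HS (N : ℕ) {s t : ℝ} (hs : 0 < s) (ht : 0 < t) {g : Euc N → ℝ≥0∞} (hg : Measurable g) (x : Euc N) :
    HS N t (HS N s g) x = HS N (t + s) g x := by
  unfold HS
  have m := hk_meas' N
  simp_rw [← hk_semi N hs ht]
  have h1 : ∀ y : Euc N, hk N t (x - y) * ∫⁻ z, hk N s (y - z) * g z =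
      ∫⁻ z, hk N t (x - y) * (hk N s (y - z) * g z) := by
    intro y
    rw [lintegral_const_mul]
    have := m s
    fun_prop
  simp_rw [h1]
  rw [lintegral_lintegral_swap]
  · refine lintegral_congr fun z => ?_
    rw [← lintegral_mul_const]
    · simp_rw [mul_assoc]
    · have := m s
      have := m t
      fun_prop
  · have := m s
    have := m t
    apply Measurable.aemeasurable
    unfold Function.uncurry
    fun_prop

lemma HS_meas (N : ℕ) {t : ℝ} {g : Euc N → ℝ≥0∞} (hg : Measurable g) : Measurable (HS N t g) := by
  unfold HS
  have := hk_meas' N t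
  apply Measurable.lintegral_prod_right (f := fun x y => hk N t (x - y) * g y)
  fun_prop

lemma HS_const_le (N : ℕ) {t : ℝ} (ht : 0 < t) {g : Euc N → ℝ≥0∞} {M : ℝ≥0∞}
    (hg : ∀ᵐ y, g y ≤ M) (x : Euc N) : HS N t g x ≤ M := by
  unfold HS
  calc _ ≤ ∫⁻ y, hk N t (x - y) * M := by
        apply lintegral_mono_ae
        filter_upwards [hg] with y hy
        gcongr
    _ = M := by
        have := hk_meas' N t
        rw [lintegral_mul_const, hk_int N ht, one_mul]
        fun_prop

lemma HS_congr (N : ℕ) {t : ℝ} {g g' : Euc N → ℝ≥0∞} (h : ∀ᵐ y, g y = g' y) (x : Euc N) :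
    HS N t g x = HS N t g' x := by
  unfold HS
  apply lintegral_congr_ae
  filter_upwards [h] with y hy
  rw [hy]

lemma HS_add (N : ℕ) {t : ℝ} {g g' : Euc N → ℝ≥0∞} (hg : Measurable g) (x : Euc N) :
    HS N t (fun y => g y + g' y) x = HS N t g x + HS N t g' x := by
  unfold HS
  have := hk_meas' N t
  simp_rw [mul_add]
  rw [lintegral_add_left]
  fun_prop

/-- Restarted Duhamel formula, abstract form. -/
lemma duhamel_restart (N : ℕ) {f : Euc N → ℝ≥0∞} (hf : Measurable f) {F : ℝ → Euc N → ℝ≥0∞}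
    (hF : Measurable (Function.uncurry F)) {s t : ℝ} (hs : 0 < s) (hst : s < t) {us : Euc N → ℝ≥0∞}
    (hus : ∀ᵐ x, us x = HS N s f x + ∫⁻ r in Set.Ioo 0 s, HS N (s - r) (F r) x) (x : Euc N) :
    HS N t f x + ∫⁻ r in Set.Ioo 0 t, HS N (t - r) (F r) x =
      HS N (t - s) us x + ∫⁻ r in Set.Ioo s t, HS N (t - r) (F r) x := by
  have hts : 0 < t - s := by linarith
  have hFr : ∀ r, Measurable (F r) := fun r => hF.comp measurable_prodMk_left
  have hsplit : ∫⁻ r in Set.Ioo 0 t, HS N (t - r) (F r) x =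
      (∫⁻ r in Set.Ioo 0 s, HS N (t - r) (F r) x) + ∫⁻ r in Set.Ioo s t, HS N (t - r) (F r) x := by
    have e : Set.Ioo 0 t = Set.Ioc 0 s ∪ Set.Ioo s t := (Set.Ioc_union_Ioo_eq_Ioo hs.le hst).symm
    rw [e, lintegral_union measurableSet_Ioo, setLIntegral_congr (Ioo_ae_eq_Ioc (a := (0:ℝ)) (b := s)).symm]
    rw [Set.disjoint_left]
    intro a ha hb
    exact absurd ha.2 (not_le.2 hb.1)
  rw [HS_congr N hus, HS_add N (HS_meas N hf), HS_HS N hs hts hf, sub_add_cancel, hsplit, ← add_assoc]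
  congr 2
  have hm := hk_meas N
  have e1 : ∀ r ∈ Set.Ioo 0 s, HS N (t - r) (F r) x = HS N (t - s) (HS N (s - r) (F r)) x := by
    intro r hr
    rw [HS_HS N (by linarith [hr.2]) hts (hFr r)]
    congr 1
    ring
  rw [setLIntegral_congr_fun measurableSet_Ioo e1]
  have hjm : Measurable (Function.uncurry fun (r : ℝ) (y : Euc N) => HS N (s - r) (F r) y) := by
    unfold HS Function.uncurry
    apply Measurable.lintegral_prod_right (f := fun (p : ℝ × Euc N) z => hk N (s - p.1) (p.2 - z) * F p.1 z)
    have h1 : Measurable fun a : (ℝ × Euc N) × Euc N => hk N (s - a.1.1) (a.1.2 - a.2) :=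
      hm.comp (f := fun a : (ℝ × Euc N) × Euc N => (s - a.1.1, a.1.2 - a.2)) (by fun_prop)
    have h2 : Measurable fun a : (ℝ × Euc N) × Euc N => F a.1.1 a.2 :=
      hF.comp (f := fun a : (ℝ × Euc N) × Euc N => (a.1.1, a.2)) (by fun_prop)
    exact h1.mul h2
  have hkm := hk_meas' N (t - s)
  conv_rhs => unfold HS
  conv_lhs => unfold HS
  rw [lintegral_lintegral_swap]
  · refine lintegral_congr fun y => ?_
    rw [lintegral_const_mul]
    exact hjm.comp (f := fun r : ℝ => (r, y)) (by fun_prop)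
  · apply Measurable.aemeasurable
    have h2 : Measurable fun a : ℝ × Euc N => HS N (s - a.1) (F a.1) a.2 := hjm
    have h1 : Measurable fun a : ℝ × Euc N => hk N (t - s) (x - a.2) := by fun_prop
    exact h1.mul h2

/-- Volume of the unit ball. -/
def om (N : ℕ) : ℝ := (volume (Metric.ball (0 : Euc N) 1)).toReal

lemma om_pos (N : ℕ) : 0 < om N :=
  ENNReal.toReal_pos (Metric.measure_ball_pos _ _ one_pos).ne' measure_ball_lt_top.ne

lemma vol_ball (N : ℕ) {σ : ℝ} (hσ : 0 < σ) (z : Euc N) :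
    volume (Metric.ball z (Real.sqrt σ)) = ENNReal.ofReal (om N * σ ^ ((N : ℝ) / 2)) := by
  rw [Measure.addHaar_ball_of_pos _ _ (Real.sqrt_pos.2 hσ), mul_comm (om N), ENNReal.ofReal_mul (by positivity), om,
    ENNReal.ofReal_toReal measure_ball_lt_top.ne]
  congr 2
  rw [finrank_euclideanSpace, Fintype.card_fin, Real.sqrt_eq_rpow, ← Real.rpow_natCast, ← Real.rpow_mul hσ.le]
  congr 1
  ring

lemma hk_compare (N : ℕ) {σ : ℝ} (hσ : 0 < σ) (x y z : Euc N) (hyz : dist y z < Real.sqrt (σ / 2)) :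
    hk N σ (x - y) ≤ ENNReal.ofReal (2 ^ ((N : ℝ) / 2) * Real.exp (1 / 8)) * hk N (2 * σ) (x - z) := by
  unfold hk
  rw [← ENNReal.ofReal_mul (by positivity)]
  apply ENNReal.ofReal_le_ofReal
  have h1 : ‖y - z‖ ^ 2 ≤ σ / 2 := by
    rw [← dist_eq_norm]
    have := Real.sq_sqrt (show 0 ≤ σ / 2 by positivity)
    rw [← this]
    gcongr
  have h2 : ‖x - z‖ ^ 2 ≤ 2 * ‖x - y‖ ^ 2 + 2 * ‖y - z‖ ^ 2 := by
    have : ‖x - z‖ ≤ ‖x - y‖ + ‖y - z‖ := norm_sub_le_norm_sub_add_norm_sub x y z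
    nlinarith [norm_nonneg (x - z), sq_nonneg (‖x - y‖ - ‖y - z‖)]
  have h3 : -‖x - y‖ ^ 2 / (4 * σ) ≤ 1 / 8 + -‖x - z‖ ^ 2 / (4 * (2 * σ)) := by
    have : 1 / 8 + -‖x - z‖ ^ 2 / (4 * (2 * σ)) - (-‖x - y‖ ^ 2 / (4 * σ)) =
        (σ + 2 * ‖x - y‖ ^ 2 - ‖x - z‖ ^ 2) / (8 * σ) := by
      field_simp
      ring
    have : 0 ≤ (σ + 2 * ‖x - y‖ ^ 2 - ‖x - z‖ ^ 2) / (8 * σ) := by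
      apply div_nonneg <;> linarith
    linarith
  have h4 := Real.exp_le_exp.2 h3
  rw [Real.exp_add] at h4
  have e : 4 * Real.pi * (2 * σ) = 2 * (4 * Real.pi * σ) := by ring
  have e2 : (2:ℝ) ^ ((N : ℝ) / 2) * 2 ^ (-(N : ℝ) / 2) = 1 := by
    rw [← Real.rpow_add two_pos]
    ring_nf
    simp
  rw [e, Real.mul_rpow (x := 2) (by positivity) (by positivity)]
  calc _ ≤ (4 * Real.pi * σ) ^ (-(N : ℝ) / 2) * (Real.exp (1 / 8) * Real.exp (-‖x - z‖ ^ 2 / (4 * (2 * σ)))) := by gcongr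
    _ = (2 ^ ((N : ℝ) / 2) * 2 ^ (-(N : ℝ) / 2)) * ((4 * Real.pi * σ) ^ (-(N : ℝ) / 2) * (Real.exp (1 / 8) * Real.exp (-‖x - z‖ ^ 2 / (4 * (2 * σ))))) := by rw [e2, one_mul]
    _ = _ := by ring

lemma HS_le_of_ball (N : ℕ) {σ : ℝ} (hσ : 0 < σ) {g : Euc N → ℝ≥0∞} (hg : Measurable g) {K : ℝ≥0∞}
    (h : ∀ z, ∫⁻ y in Metric.ball z (Real.sqrt (σ / 2)), g y ≤ K) (x : Euc N) :
    ENNReal.ofReal (om N * (σ / 2) ^ ((N : ℝ) / 2)) * HS N σ g x ≤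
      ENNReal.ofReal (2 ^ ((N : ℝ) / 2) * Real.exp (1 / 8)) * K := by
  set C := ENNReal.ofReal (2 ^ ((N : ℝ) / 2) * Real.exp (1 / 8)) with hC
  set ρ := Real.sqrt (σ / 2) with hρ
  have hm := hk_meas' N σ
  have hm2 := hk_meas' N (2 * σ)
  have hset : MeasurableSet {a : Euc N × Euc N | dist a.1 a.2 < ρ} :=
    measurableSet_lt (by fun_prop) (by fun_prop)
  unfold HS
  calc ENNReal.ofReal (om N * (σ / 2) ^ ((N : ℝ) / 2)) * ∫⁻ y, hk N σ (x - y) * g y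
      = ∫⁻ y, ∫⁻ z in Metric.ball y ρ, hk N σ (x - y) * g y := by
        rw [← lintegral_const_mul _ (by fun_prop)]
        refine lintegral_congr fun y => ?_
        rw [setLIntegral_const, vol_ball N (by positivity), mul_comm]
    _ ≤ ∫⁻ y, ∫⁻ z in Metric.ball y ρ, C * hk N (2 * σ) (x - z) * g y := by
        refine lintegral_mono fun y => ?_
        refine setLIntegral_mono (by fun_prop) fun z hz => ?_
        gcongr
        apply hk_compare N hσ
        rw [dist_comm]
        exact hz
    _ = ∫⁻ y, ∫⁻ z, {a : Euc N × Euc N | dist a.1 a.2 < ρ}.indicator (fun a => C * hk N (2 * σ) (x - a.2) * g a.1) (y, z) := by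
        refine lintegral_congr fun y => ?_
        rw [← lintegral_indicator measurableSet_ball]
        refine lintegral_congr fun z => ?_
        simp only [Set.indicator, Metric.mem_ball, Set.mem_ofPred_eq, dist_comm]
    _ = ∫⁻ z, ∫⁻ y, {a : Euc N × Euc N | dist a.1 a.2 < ρ}.indicator (fun a => C * hk N (2 * σ) (x - a.2) * g a.1) (y, z) := by
        rw [lintegral_lintegral_swap]
        apply Measurable.aemeasurable
        exact Measurable.indicator (by fun_prop) hset
    _ = ∫⁻ z, C * hk N (2 * σ) (x - z) * ∫⁻ y in Metric.ball z ρ, g y := by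
        refine lintegral_congr fun z => ?_
        rw [← lintegral_const_mul _ hg, ← lintegral_indicator measurableSet_ball]
        refine lintegral_congr fun y => ?_
        simp only [Set.indicator, Metric.mem_ball, Set.mem_ofPred_eq]
    _ ≤ ∫⁻ z, C * hk N (2 * σ) (x - z) * K := by
        refine lintegral_mono fun z => ?_
        gcongr
        exact h z
    _ = C * K := by
        rw [lintegral_mul_const _ (by fun_prop), lintegral_const_mul _ (by fun_prop),
          hk_int N (by positivity), mul_one]

/-- Smallness of averages over balls. -/
def Avg (N : ℕ) (T k γ : ℝ) (w : Euc N → ℝ → ℝ) : Prop :=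
  ∀ ε : ℝ, 0 < ε → ∃ T0, 0 < T0 ∧ T0 < T ∧ ∀ s, T0 < s → s < T → ∀ σ, 0 < σ → k * σ ≤ T - s →
    ∀ z : Euc N, ∫⁻ y in Metric.ball z (Real.sqrt σ), ENNReal.ofReal (w y s) ≤
      ENNReal.ofReal (ε * σ ^ ((N : ℝ) / 2 - γ))

/-- Smallness of the heat flow. -/
def Sml (N : ℕ) (T γ : ℝ) (w : Euc N → ℝ → ℝ) : Prop :=
  ∀ ε : ℝ, 0 < ε → ∃ T0, 0 < T0 ∧ T0 < T ∧ ∀ s, T0 < s → s < T → ∀ σ, 0 < σ → σ ≤ T - s →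
    ∀ x : Euc N, HS N σ (fun y => ENNReal.ofReal (w y s)) x ≤ ENNReal.ofReal (ε * σ ^ (-γ))

lemma sml_of_avg (N : ℕ) (T γ : ℝ) (w : Euc N → ℝ → ℝ) (hw : Measurable (Function.uncurry w))
    (h : Avg N T 2 γ w) : Sml N T γ w := by
  intro ε hε
  have ho := om_pos N
  set C := 2 ^ ((N : ℝ) / 2) * Real.exp (1 / 8) with hC
  have hCp : 0 < C := by positivity
  obtain ⟨T0, h0, h1, h2⟩ := h (ε * om N / C * (1 / 2) ^ γ) (by positivity)
  refine ⟨T0, h0, h1, fun s hs hsT σ hσ hσT x => ?_⟩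
  have hwm : Measurable fun y => ENNReal.ofReal (w y s) := by
    apply ENNReal.measurable_ofReal.comp
    exact hw.comp (f := fun y : Euc N => (y, s)) (by fun_prop)
  have h3 := HS_le_of_ball N hσ hwm (h2 s hs hsT (σ / 2) (by positivity) (by linarith)) x
  rw [← hC, ← ENNReal.ofReal_mul hCp.le] at h3
  have hA : 0 < om N * (σ / 2) ^ ((N : ℝ) / 2) := by positivity
  have e : C * (ε * om N / C * (1 / 2) ^ γ * (σ / 2) ^ ((N : ℝ) / 2 - γ)) =
     (om N * (σ / 2) ^ ((N : ℝ) / 2)) * (ε * σ ^ (-γ)) := by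
    have : σ / 2 = σ * (1/2) := by ring
    rw [sub_eq_add_neg, Real.rpow_add (by positivity), this, Real.mul_rpow (x := σ) (y := 1/2) (z := -γ) hσ.le (by norm_num),
      Real.rpow_neg (x := 1/2) (by norm_num)]
    have : 0 < (1/2:ℝ)^γ := by positivity
    field_simp
  rw [e, ENNReal.ofReal_mul hA.le] at h3
  rwa [ENNReal.mul_le_mul_iff_right (by simpa using hA) ENNReal.ofReal_ne_top] at h3

lemma weak_int (N : ℕ) {r K V : ℝ} (hr : 1 < r) (hK : 0 < K) (hV : 0 < V) {f : Euc N → ℝ}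
    (hf : Measurable f) (hf0 : ∀ x, 0 ≤ f x) {B B' : Set (Euc N)} (hBB : B ⊆ B')
    (hvol : volume B = ENNReal.ofReal V)
    (hw : (⨆ (l : ℝ) (_ : 0 < l), ENNReal.ofReal l * (volume {x ∈ B' | l < |f x|}) ^ (1 / r)) ≤ ENNReal.ofReal K) :
    ∫⁻ x in B, ENNReal.ofReal (f x) ≤ ENNReal.ofReal (K * V ^ (1 - 1 / r) * (1 + 1 / (r - 1))) := by
  have hr0 : 0 < r := by linarith
  have hr1 : 0 < r - 1 := by linarith
  rw [lintegral_eq_lintegral_meas_lt _ (Eventually.of_forall hf0) hf.aemeasurable]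
  set L := K * V ^ (-(1 / r)) with hL
  have hLp : 0 < L := by positivity
  have b1 : ∀ l, volume.restrict B {a | l < f a} ≤ ENNReal.ofReal V := by
    intro l
    exact (measure_mono (Set.subset_univ _)).trans (by rw [Measure.restrict_apply_univ, hvol])
  have b2 : ∀ l, 0 < l → volume.restrict B {a | l < f a} ≤ ENNReal.ofReal (K ^ r * l ^ (-r)) := by
    intro l hl
    have h1 : volume.restrict B {a | l < f a} ≤ volume {x ∈ B' | l < |f x|} := by
      rw [Measure.restrict_apply (measurableSet_lt measurable_const hf)]
      apply measure_mono
      rintro a ⟨ha, hb⟩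
      exact ⟨hBB hb, by rw [abs_of_nonneg (hf0 a)]; exact ha⟩
    refine h1.trans ?_
    have h2 := (le_iSup₂ (f := fun (l : ℝ) (_ : 0 < l) => ENNReal.ofReal l * (volume {x ∈ B' | l < |f x|}) ^ (1 / r)) l hl).trans hw
    have h3 : (volume {x ∈ B' | l < |f x|}) ^ (1 / r) ≤ ENNReal.ofReal (K / l) := by
      rw [ENNReal.ofReal_div_of_pos hl]
      rw [ENNReal.le_div_iff_mul_le (by simp [hl]) (by simp), mul_comm]
      exact h2
    have h4 := ENNReal.rpow_le_rpow h3 hr0.le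
    rw [← ENNReal.rpow_mul, one_div_mul_cancel hr0.ne', ENNReal.rpow_one,
      ENNReal.ofReal_rpow_of_pos (by positivity), Real.div_rpow hK.le hl.le] at h4
    rwa [Real.rpow_neg hl.le]
  have e : Set.Ioi (0:ℝ) = Set.Ioc 0 L ∪ Set.Ioi L := (Set.Ioc_union_Ioi_eq_Ioi hLp.le).symm
  rw [e]
  refine (lintegral_union_le _ _ _).trans ?_
  have i1 : ∫⁻ l in Set.Ioc 0 L, volume.restrict B {a | l < f a} ≤ ENNReal.ofReal (V * L) := by
    calc _ ≤ ∫⁻ l in Set.Ioc 0 L, ENNReal.ofReal V := lintegral_mono b1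
      _ = _ := by
        rw [setLIntegral_const, Real.volume_Ioc, sub_zero, ENNReal.ofReal_mul hV.le]
  have i2 : ∫⁻ l in Set.Ioi L, volume.restrict B {a | l < f a} ≤ ENNReal.ofReal (K ^ r * (-L ^ (-r + 1) / (-r + 1))) := by
    calc _ ≤ ∫⁻ l in Set.Ioi L, ENNReal.ofReal (K ^ r * l ^ (-r)) := by
          refine setLIntegral_mono (by fun_prop) fun l hl => b2 l (hLp.trans hl)
      _ = _ := by
        rw [← ofReal_integral_eq_lintegral_ofReal, integral_const_mul, integral_Ioi_rpow_of_lt (by linarith) hLp]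
        · exact (integrableOn_Ioi_rpow_of_lt (by linarith) hLp).const_mul _
        · refine (ae_restrict_iff' measurableSet_Ioi).2 (Eventually.of_forall fun l hl => ?_)
          have : 0 < l := hLp.trans hl
          positivity
  refine (add_le_add i1 i2).trans ?_
  have e2 : L ^ (-r + 1) = K ^ (-r + 1) * V ^ (1 - 1 / r) := by
    rw [hL, Real.mul_rpow hK.le (by positivity), ← Real.rpow_mul hV.le]
    congr 2
    field_simp
    ring
  have e3 : K ^ r * K ^ (-r + 1) = K := by
    rw [← Real.rpow_add hK]; simp
  have e4 : V * V ^ (-(1 / r)) = V ^ (1 - 1 / r) := by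
    rw [sub_eq_add_neg, Real.rpow_add hV, Real.rpow_one]
  have e5 : K ^ r * (-L ^ (-r + 1) / (-r + 1)) = K * V ^ (1 - 1 / r) * (1 / (r - 1)) := by
    have : -r + 1 = -(r - 1) := by ring
    rw [neg_div, e2]
    nth_rewrite 2 [this]
    rw [div_neg, neg_neg]
    calc _ = (K ^ r * K ^ (-r + 1)) * V ^ (1 - 1 / r) * (1 / (r - 1)) := by ring
      _ = _ := by rw [e3]
  rw [e5, ← ENNReal.ofReal_add (by positivity) (by positivity)]
  apply ENNReal.ofReal_le_ofReal
  rw [hL, ← e4]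
  apply le_of_eq
  ring

lemma uloc_int (N : ℕ) (r : ℝ≥0∞) (hr : 1 < r) : ∃ C : ℝ, 0 < C ∧
    ∀ (f : Euc N → ℝ), Measurable f → (∀ x, 0 ≤ f x) → ∀ K ρ σ : ℝ, 0 < K → 0 < σ → Real.sqrt σ ≤ ρ →
      ulocNorm N r ρ f ≤ ENNReal.ofReal K → ∀ z : Euc N,
      ∫⁻ y in Metric.ball z (Real.sqrt σ), ENNReal.ofReal (f y) ≤
        ENNReal.ofReal (C * K * σ ^ ((N : ℝ) / 2 - (N : ℝ) / 2 * r⁻¹.toReal)) := by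
  have ho := om_pos N
  by_cases hrt : r = ⊤
  · refine ⟨om N, ho, fun f hf hf0 K ρ σ hK hσ hρ hn z => ?_⟩
    subst hrt
    simp only [ulocNorm, if_true] at hn
    have hae : ∀ᵐ y, ENNReal.ofReal (f y) ≤ ENNReal.ofReal K := by
      filter_upwards [ENNReal.ae_le_essSup (μ := volume) (fun x => ENNReal.ofReal |f x|)] with y hy
      rw [abs_of_nonneg (hf0 y)] at hy
      exact hy.trans hn
    calc _ ≤ ∫⁻ y in Metric.ball z (Real.sqrt σ), ENNReal.ofReal K :=
          lintegral_mono_ae (ae_restrict_of_ae hae)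
      _ = _ := by
        rw [setLIntegral_const, vol_ball N hσ, ← ENNReal.ofReal_mul hK.le]
        simp
        congr 1
        ring
  · have h1 : 1 < r.toReal := by
      rw [← ENNReal.toReal_one]
      exact (ENNReal.toReal_lt_toReal ENNReal.one_ne_top hrt).2 hr
    have h2 : 0 < r.toReal - 1 := by linarith
    refine ⟨om N ^ (1 - 1 / r.toReal) * (1 + 1 / (r.toReal - 1)), by positivity,
      fun f hf hf0 K ρ σ hK hσ hρ hn z => ?_⟩
    simp only [ulocNorm, if_neg hrt] at hn
    have h3 := (le_iSup (fun x => wnorm N r f (Metric.ball x ρ)) z).trans hn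
    simp only [wnorm, if_neg hrt, if_neg hr.ne'] at h3
    have h4 := weak_int N h1 hK (show 0 < om N * σ ^ ((N : ℝ) / 2) by positivity) hf hf0
      (Metric.ball_subset_ball hρ) (vol_ball N hσ z) h3
    refine h4.trans (le_of_eq ?_)
    congr 1
    rw [Real.mul_rpow ho.le (by positivity), ← Real.rpow_mul hσ.le, ENNReal.toReal_inv]
    have : (N : ℝ) / 2 * (1 - 1 / r.toReal) = (N : ℝ) / 2 - (N : ℝ) / 2 * r.toReal⁻¹ := by
      field_simp
    rw [this]
    ring

lemma avg_of_limsup (N : ℕ) (r : ℝ≥0∞) (hr : 1 < r) (T α : ℝ) (hT : 0 < T)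
    (ha : (N : ℝ) / 2 * r⁻¹.toReal ≤ α) (u : Euc N → ℝ → ℝ) (hu : Measurable (Function.uncurry u))
    (hu0 : ∀ x t, 0 ≤ u x t)
    (hlim : Filter.limsup (fun t : ℝ =>
          ENNReal.ofReal ((T - t) ^ (α - (N : ℝ) / 2 * r⁻¹.toReal)) *
            ulocNorm N r (Real.sqrt (T - t)) (fun x => u x t))
          (nhdsWithin T (Set.Iio T)) = 0) : Avg N T 1 α u := by
  intro ε hε
  obtain ⟨C, hC, hCC⟩ := uloc_int N r hr
  set a := (N : ℝ) / 2 * r⁻¹.toReal with hadef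
  have hδ : 0 < ε / C := by positivity
  have hev := eventually_lt_of_limsup_lt (hlim.trans_lt (ENNReal.ofReal_pos.2 hδ))
  obtain ⟨T1, hT1, hsub⟩ := (mem_nhdsLT_iff_exists_Ioo_subset (a := T)).1 hev
  refine ⟨max T1 (T / 2), lt_max_of_lt_right (by positivity), max_lt hT1 (by linarith), ?_⟩
  intro s hs hsT σ hσ hσT z
  have h1 := hsub (show s ∈ Set.Ioo T1 T from ⟨(le_max_left _ _).trans_lt hs, hsT⟩)
  simp only [Set.mem_ofPred_eq] at h1
  have hTs : 0 < T - s := by linarith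
  rw [one_mul] at hσT
  have hP : 0 < (T - s) ^ (α - a) := by positivity
  have hU : ulocNorm N r (Real.sqrt (T - s)) (fun x => u x s) ≤ ENNReal.ofReal (ε / C * σ ^ (-(α - a))) := by
    have : ulocNorm N r (Real.sqrt (T - s)) (fun x => u x s) ≤ ENNReal.ofReal (ε / C / (T - s) ^ (α - a)) := by
      rw [ENNReal.ofReal_div_of_pos hP, ENNReal.le_div_iff_mul_le (by simp [hP]) (by simp), mul_comm]
      exact h1.le
    refine this.trans (ENNReal.ofReal_le_ofReal ?_)
    rw [Real.rpow_neg hσ.le, div_eq_mul_inv]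
    have : σ ^ (α - a) ≤ (T - s) ^ (α - a) := Real.rpow_le_rpow hσ.le hσT (by linarith)
    gcongr
  have h2 := hCC (fun x => u x s) (hu.comp (f := fun y : Euc N => (y, s)) (by fun_prop)) (fun x => hu0 x s)
    _ _ σ (by positivity) hσ (Real.sqrt_le_sqrt hσT) hU z
  refine h2.trans (le_of_eq ?_)
  congr 1
  have : σ ^ ((N : ℝ) / 2 - α) = σ ^ (-(α - a)) * σ ^ ((N : ℝ) / 2 - a) := by
    rw [← Real.rpow_add hσ]; congr 1; ring
  rw [this]
  field_simp

lemma HS_lower (N : ℕ) {σ θ : ℝ} (hσ : 0 < σ) (h1 : σ / 3 ≤ θ) (h2 : θ ≤ σ) (g : Euc N → ℝ≥0∞)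
    {x z : Euc N} (hx : x ∈ Metric.ball z (Real.sqrt σ)) :
    ENNReal.ofReal ((4 * Real.pi) ^ (-(N : ℝ) / 2) * Real.exp (-3) * σ ^ (-(N : ℝ) / 2)) *
      ∫⁻ y in Metric.ball z (Real.sqrt σ), g y ≤ HS N θ g x := by
  have hθ : 0 < θ := by linarith
  unfold HS
  rw [← lintegral_const_mul' _ _ ENNReal.ofReal_ne_top]
  refine le_trans ?_ (setLIntegral_le_lintegral (Metric.ball z (Real.sqrt σ)) _)
  refine lintegral_mono_ae ((ae_restrict_iff' measurableSet_ball).2 (Eventually.of_forall fun y hy => ?_))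
  gcongr
  unfold hk
  apply ENNReal.ofReal_le_ofReal
  have e : (4 * Real.pi) ^ (-(N : ℝ) / 2) * Real.exp (-3) * σ ^ (-(N : ℝ) / 2) =
      (4 * Real.pi * σ) ^ (-(N : ℝ) / 2) * Real.exp (-3) := by
    rw [Real.mul_rpow (y := σ) (by positivity) hσ.le]; ring
  rw [e]
  have hN : -(N : ℝ) / 2 ≤ 0 := by
    have : (0:ℝ) ≤ N := Nat.cast_nonneg N
    linarith
  have hpow : (4 * Real.pi * σ) ^ (-(N : ℝ) / 2) ≤ (4 * Real.pi * θ) ^ (-(N : ℝ) / 2) := by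
    apply Real.rpow_le_rpow_of_nonpos (by positivity) _ hN
    gcongr
  have hd : ‖x - y‖ ^ 2 ≤ 4 * σ := by
    have h3 : ‖x - y‖ ≤ 2 * Real.sqrt σ := by
      rw [← dist_eq_norm]
      have := dist_triangle_right x y z
      have := Metric.mem_ball.1 hx
      have := Metric.mem_ball.1 hy
      linarith
    calc _ ≤ (2 * Real.sqrt σ) ^ 2 := by gcongr
      _ = _ := by rw [mul_pow, Real.sq_sqrt hσ.le]; ring
  have hexp : Real.exp (-3) ≤ Real.exp (-‖x - y‖ ^ 2 / (4 * θ)) := by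
    apply Real.exp_le_exp.2
    rw [le_div_iff₀ (by positivity)]
    linarith
  gcongr

lemma avg_v (N : ℕ) {p α β T : ℝ} (hp : 0 < p) (hpβ : p * β = α + 1) {u v : Euc N → ℝ → ℝ}
    (hv0 : ∀ x t, 0 ≤ v x t)
    (hRu : ∀ s t, 0 < s → s < t → t < T → ∀ᵐ x,
      ∫⁻ τ in Set.Ioo s t, HS N (t - τ) (fun y => ENNReal.ofReal (v y τ ^ p)) x ≤ ENNReal.ofReal (u x t))
    (hRv : ∀ s t, 0 < s → s < t → t < T → ∀ᵐ x,
      HS N (t - s) (fun y => ENNReal.ofReal (v y s)) x ≤ ENNReal.ofReal (v x t))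
    (hA : Avg N T 1 α u) : Avg N T 2 β v := by
  intro ε hε
  have ho := om_pos N
  set c0 := (4 * Real.pi) ^ (-(N : ℝ) / 2) * Real.exp (-3) with hc0
  have hc0p : 0 < c0 := by positivity
  set D := c0 * om N * (c0 * ε) ^ p / 3 with hD
  have hDp : 0 < D := by positivity
  obtain ⟨T0, h0, h1, h2⟩ := hA (D * om N / 2) (by positivity)
  refine ⟨T0, h0, h1, fun s hs hsT σ hσ hσT z => ?_⟩
  by_contra hcon
  push Not at hcon
  set B := Metric.ball z (Real.sqrt σ) with hB
  have hs0 : 0 < s := h0.trans hs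
  have htT : s + σ < T := by linarith
  have hvlow : ∀ τ ∈ Set.Ioo (s + σ / 3) (s + 2 * σ / 3), ∀ᵐ y, y ∈ B → c0 * ε * σ ^ (-β) ≤ v y τ := by
    intro τ hτ
    filter_upwards [hRv s τ hs0 (by linarith [hτ.1]) (by linarith [hτ.2])] with y hy hyB
    have h3 := HS_lower N hσ (θ := τ - s) (by linarith [hτ.1]) (by linarith [hτ.2])
      (fun y => ENNReal.ofReal (v y s)) hyB
    rw [← hc0] at h3
    have h4 : ENNReal.ofReal (c0 * ε * σ ^ (-β)) ≤ ENNReal.ofReal (v y τ) := by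
      refine le_trans ?_ (h3.trans hy)
      refine le_trans (le_of_eq ?_) (mul_le_mul_right hcon.le _)
      rw [← ENNReal.ofReal_mul (by positivity)]
      congr 1
      have : σ ^ (-β) = σ ^ (-(N : ℝ) / 2) * σ ^ ((N : ℝ) / 2 - β) := by
        rw [← Real.rpow_add hσ]; congr 1; ring
      rw [this]; ring
    exact (ENNReal.ofReal_le_ofReal_iff (hv0 y τ)).1 h4
  have hHS : ∀ x ∈ B, ∀ τ ∈ Set.Ioo (s + σ / 3) (s + 2 * σ / 3),
      ENNReal.ofReal (c0 * om N * (c0 * ε) ^ p * σ ^ (-α - 1)) ≤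
        HS N (s + σ - τ) (fun y => ENNReal.ofReal (v y τ ^ p)) x := by
    intro x hx τ hτ
    have h3 := HS_lower N hσ (θ := s + σ - τ) (by linarith [hτ.2]) (by linarith [hτ.1])
      (fun y => ENNReal.ofReal (v y τ ^ p)) hx
    rw [← hc0] at h3
    refine le_trans ?_ h3
    have h4 : ENNReal.ofReal ((c0 * ε * σ ^ (-β)) ^ p) * volume B ≤ ∫⁻ y in B, ENNReal.ofReal (v y τ ^ p) := by
      rw [← setLIntegral_const]
      refine lintegral_mono_ae ((ae_restrict_iff' measurableSet_ball).2 ?_)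
      filter_upwards [hvlow τ hτ] with y hy hyB
      apply ENNReal.ofReal_le_ofReal
      exact Real.rpow_le_rpow (by positivity) (hy hyB) hp.le
    refine le_trans (le_of_eq ?_) (mul_le_mul_right h4 _)
    rw [hB, vol_ball N hσ, ← ENNReal.ofReal_mul (by positivity), ← ENNReal.ofReal_mul (by positivity)]
    congr 1
    rw [Real.mul_rpow (x := c0 * ε) (by positivity) (by positivity), ← Real.rpow_mul hσ.le]
    have e1 : -β * p = -α - 1 := by linarith
    have e2 : σ ^ (-(N : ℝ) / 2) * σ ^ ((N : ℝ) / 2) = 1 := by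
      rw [← Real.rpow_add hσ, neg_div, neg_add_cancel, Real.rpow_zero]
    rw [e1]
    calc _ = (σ ^ (-(N : ℝ) / 2) * σ ^ ((N : ℝ) / 2)) * (c0 * om N * (c0 * ε) ^ p * σ ^ (-α - 1)) := by rw [e2, one_mul]
      _ = _ := by ring
  have hulow : ∀ᵐ x, x ∈ B → ENNReal.ofReal (D * σ ^ (-α)) ≤ ENNReal.ofReal (u x (s + σ)) := by
    filter_upwards [hRu s (s + σ) hs0 (by linarith) htT] with x hx hxB
    refine le_trans ?_ hx
    calc ENNReal.ofReal (D * σ ^ (-α))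
        = ∫⁻ τ in Set.Ioo (s + σ / 3) (s + 2 * σ / 3), ENNReal.ofReal (c0 * om N * (c0 * ε) ^ p * σ ^ (-α - 1)) := by
          rw [setLIntegral_const, Real.volume_Ioo, ← ENNReal.ofReal_mul (by positivity)]
          congr 1
          have : σ ^ (-α) = σ ^ (-α - 1) * σ := by
            rw [← Real.rpow_add_one hσ.ne']; congr 1; ring
          rw [this, hD]
          ring
      _ ≤ ∫⁻ τ in Set.Ioo (s + σ / 3) (s + 2 * σ / 3), HS N (s + σ - τ) (fun y => ENNReal.ofReal (v y τ ^ p)) x :=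
          lintegral_mono_ae ((ae_restrict_iff' measurableSet_Ioo).2 (Eventually.of_forall (hHS x hxB)))
      _ ≤ _ := by
          apply lintegral_mono_set
          apply Set.Ioo_subset_Ioo <;> linarith
  have hfin : ENNReal.ofReal (D * σ ^ (-α)) * volume B ≤ ENNReal.ofReal (D * om N / 2 * σ ^ ((N : ℝ) / 2 - α)) := by
    refine le_trans ?_ (h2 (s + σ) (by linarith) htT σ hσ (by linarith) z)
    rw [← setLIntegral_const]
    exact lintegral_mono_ae ((ae_restrict_iff' measurableSet_ball).2 hulow)
  rw [hB, vol_ball N hσ, ← ENNReal.ofReal_mul (by positivity), ENNReal.ofReal_le_ofReal_iff (by positivity)] at hfin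
  have e : σ ^ ((N : ℝ) / 2 - α) = σ ^ (-α) * σ ^ ((N : ℝ) / 2) := by
    rw [← Real.rpow_add hσ]; congr 1; ring
  rw [e] at hfin
  have : 0 < D * om N * (σ ^ (-α) * σ ^ ((N : ℝ) / 2)) := by positivity
  linarith

lemma half_step (N : ℕ) {p α β κ ε Y s t : ℝ} (hp : 0 < p) (hpβ : p * β = α + 1) (hβ : 0 < β)
    (hκ : 0 < κ) (hκ2 : κ ≤ 1 / 2) (hκ3 : κ * 2 ^ (p * β) ≤ 2 ^ (-α) / 2)
    (hε : 0 < ε) (hε2 : ε * κ ^ (-α) ≤ 2 ^ (-α) / 2) (hY : 1 ≤ Y) (hst : s < t)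
    {u v : Euc N → ℝ → ℝ} (hv0 : ∀ x t, 0 ≤ v x t)
    (hv : ∀ τ, s < τ → τ < t → ∀ᵐ x, v x τ ≤ (Y / (τ - s)) ^ β)
    (hS : ∀ x, HS N (κ * (t - s) / Y) (fun y => ENNReal.ofReal (u y (t - κ * (t - s) / Y))) x ≤
      ENNReal.ofReal (ε * (κ * (t - s) / Y) ^ (-α)))
    (hD : ∀ᵐ x, ENNReal.ofReal (u x t) ≤
      HS N (κ * (t - s) / Y) (fun y => ENNReal.ofReal (u y (t - κ * (t - s) / Y))) x +
      ∫⁻ τ in Set.Ioo (t - κ * (t - s) / Y) t, HS N (t - τ) (fun y => ENNReal.ofReal (v y τ ^ p)) x) :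
    ∀ᵐ x, u x t ≤ (Y / 2 / (t - s)) ^ α := by
  have hts : 0 < t - s := by linarith
  set R := Y / (t - s) with hR
  have hRp : 0 < R := by positivity
  have hσ : κ * (t - s) / Y = κ / R := by rw [hR]; field_simp
  have hσle : κ / R ≤ (t - s) / 2 := by
    rw [← hσ]
    calc κ * (t - s) / Y ≤ κ * (t - s) / 1 := by gcongr
      _ ≤ 1 / 2 * (t - s) / 1 := by gcongr
      _ = _ := by ring
  rw [hσ] at hS hD
  have hbd : ∀ x, ∀ τ ∈ Set.Ioo (t - κ / R) t,
      HS N (t - τ) (fun y => ENNReal.ofReal (v y τ ^ p)) x ≤ ENNReal.ofReal (2 ^ (p * β) * R ^ (α + 1)) := by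
    intro x τ hτ
    apply HS_const_le N (by linarith [hτ.2])
    filter_upwards [hv τ (by linarith [hτ.1]) hτ.2] with y hy
    apply ENNReal.ofReal_le_ofReal
    have h1 : Y / (τ - s) ≤ 2 * R := by
      have : (t - s) / 2 ≤ τ - s := by linarith [hτ.1]
      calc Y / (τ - s) ≤ Y / ((t - s) / 2) := by gcongr
        _ = _ := by rw [hR]; field_simp
    have h0 : 0 ≤ Y / (τ - s) := div_nonneg (by linarith) (by linarith [hτ.1])
    calc v y τ ^ p ≤ ((2 * R) ^ β) ^ p :=
          Real.rpow_le_rpow (hv0 _ _) (hy.trans (Real.rpow_le_rpow h0 h1 hβ.le)) hp.le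
      _ = _ := by
        rw [← Real.rpow_mul (by positivity), mul_comm β p, Real.mul_rpow (by norm_num) hRp.le, hpβ]
  filter_upwards [hD] with x hx
  have h3 : ENNReal.ofReal (u x t) ≤ ENNReal.ofReal ((Y / 2 / (t - s)) ^ α) := by
    refine hx.trans ((add_le_add (hS x) (?_ : _ ≤ ENNReal.ofReal (2 ^ (p * β) * R ^ (α + 1) * (κ / R)))).trans ?_)
    · calc _ ≤ ∫⁻ τ in Set.Ioo (t - κ / R) t, ENNReal.ofReal (2 ^ (p * β) * R ^ (α + 1)) :=
          lintegral_mono_ae ((ae_restrict_iff' measurableSet_Ioo).2 (Eventually.of_forall (hbd x)))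
        _ = _ := by
          rw [setLIntegral_const, Real.volume_Ioo, ← ENNReal.ofReal_mul (by positivity)]
          congr 1
          ring
    · rw [← ENNReal.ofReal_add (by positivity) (by positivity)]
      apply ENNReal.ofReal_le_ofReal
      have e1 : (κ / R) ^ (-α) = κ ^ (-α) * R ^ α := by
        rw [Real.div_rpow hκ.le hRp.le, Real.rpow_neg hRp.le, div_inv_eq_mul]
      have e2 : R ^ (α + 1) * (κ / R) = κ * R ^ α := by
        rw [Real.rpow_add_one hRp.ne']; field_simp
      have e3 : (Y / 2 / (t - s)) ^ α = 2 ^ (-α) * R ^ α := by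
        have : Y / 2 / (t - s) = 2⁻¹ * R := by rw [hR]; field_simp
        rw [this, Real.mul_rpow (by norm_num) hRp.le, Real.inv_rpow (by norm_num), Real.rpow_neg (by norm_num)]
      have hRα : 0 < R ^ α := by positivity
      rw [e1, e3, mul_assoc (2 ^ (p * β)), e2]
      calc _ = (ε * κ ^ (-α) + κ * 2 ^ (p * β)) * R ^ α := by ring
        _ ≤ (2 ^ (-α) / 2 + 2 ^ (-α) / 2) * R ^ α := by gcongr
        _ = _ := by ring
  exact (ENNReal.ofReal_le_ofReal_iff (by positivity)).1 h3

lemma exists_small {b c : ℝ} (hb : 0 < b) (hc : 0 < c) : ∃ κ : ℝ, 0 < κ ∧ ∀ x, 0 < x → x ≤ κ → x * b ≤ c :=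
  ⟨c / b, by positivity, fun x hx h => (le_div_iff₀ hb).1 h⟩

lemma main_bdd (N : ℕ) {p q α β T : ℝ} (hp : 0 < p) (hq : 0 < q) (hα : 0 < α) (hβ : 0 < β)
    (hpβ : p * β = α + 1) (hqα : q * α = β + 1) {u v : Euc N → ℝ → ℝ}
    (hu0 : ∀ x t, 0 ≤ u x t) (hv0 : ∀ x t, 0 ≤ v x t)
    (hDu : ∀ s t, 0 < s → s < t → t < T → ∀ᵐ x, ENNReal.ofReal (u x t) =
      HS N (t - s) (fun y => ENNReal.ofReal (u y s)) x +
      ∫⁻ τ in Set.Ioo s t, HS N (t - τ) (fun y => ENNReal.ofReal (v y τ ^ p)) x)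
    (hDv : ∀ s t, 0 < s → s < t → t < T → ∀ᵐ x, ENNReal.ofReal (v x t) =
      HS N (t - s) (fun y => ENNReal.ofReal (v y s)) x +
      ∫⁻ τ in Set.Ioo s t, HS N (t - τ) (fun y => ENNReal.ofReal (u y τ ^ q)) x)
    (hbd : ∀ s t, 0 < s → s < t → t < T → ∃ M : ℝ, ∀ τ, s ≤ τ → τ ≤ t →
      (∀ᵐ x, u x τ ≤ M) ∧ (∀ᵐ x, v x τ ≤ M))
    (hSu : Sml N T α u) (hSv : Sml N T β v) :
    ∃ s, s < T ∧ ∀ t, s < t → t < T → (∀ᵐ x, u x t ≤ (1 / (t - s)) ^ α) ∧ (∀ᵐ x, v x t ≤ (1 / (t - s)) ^ β) := by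
  obtain ⟨k1, hk1, hk1'⟩ := exists_small (b := 2 ^ (p * β)) (c := 2 ^ (-α) / 2) (by positivity) (by positivity)
  obtain ⟨k2, hk2, hk2'⟩ := exists_small (b := 2 ^ (q * α)) (c := 2 ^ (-β) / 2) (by positivity) (by positivity)
  set κ := min (1 / 2) (min k1 k2) with hκdef
  have hκ : 0 < κ := by positivity
  have hκ2 : κ ≤ 1 / 2 := min_le_left _ _
  have hκ3 := hk1' κ hκ ((min_le_right _ _).trans (min_le_left _ _))
  have hκ4 := hk2' κ hκ ((min_le_right _ _).trans (min_le_right _ _))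
  obtain ⟨k3, hk3, hk3'⟩ := exists_small (b := κ ^ (-α)) (c := 2 ^ (-α) / 2) (by positivity) (by positivity)
  obtain ⟨k4, hk4, hk4'⟩ := exists_small (b := κ ^ (-β)) (c := 2 ^ (-β) / 2) (by positivity) (by positivity)
  obtain ⟨T1, hT1, hT1T, hS1⟩ := hSu k3 hk3
  obtain ⟨T2, hT2, hT2T, hS2⟩ := hSv k4 hk4
  have hs0 : 0 < max T1 T2 := lt_max_of_lt_left hT1
  obtain ⟨s, hs1, hsT⟩ := exists_between (max_lt hT1T hT2T)
  refine ⟨s, hsT, fun t1 hst1 ht1 => ?_⟩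
  have hsp : 0 < s := hs0.trans hs1
  have hsT1 : T1 < s := (le_max_left _ _).trans_lt hs1
  have hsT2 : T2 < s := (le_max_right _ _).trans_lt hs1
  let P : ℝ → Prop := fun Y => ∀ t, s < t → t ≤ t1 →
    (∀ᵐ x, u x t ≤ (Y / (t - s)) ^ α) ∧ (∀ᵐ x, v x t ≤ (Y / (t - s)) ^ β)
  have hstep : ∀ Y, 1 ≤ Y → P Y → P (Y / 2) := by
    intro Y hY hP t hst htt
    have hts : 0 < t - s := by linarith
    have hσ : 0 < κ * (t - s) / Y := by positivity
    have hσle : κ * (t - s) / Y ≤ (t - s) / 2 := by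
      calc κ * (t - s) / Y ≤ κ * (t - s) / 1 := by gcongr
        _ ≤ 1 / 2 * (t - s) / 1 := by gcongr
        _ = _ := by ring
    constructor
    · refine half_step N hp hpβ hβ hκ hκ2 hκ3 hk3 (hk3' k3 hk3 le_rfl) hY hst hv0
        (fun τ h1 h2 => (hP τ h1 (by linarith)).2) (hS1 _ (by linarith) (by linarith) _ hσ (by linarith)) ?_
      filter_upwards [hDu (t - κ * (t - s) / Y) t (by linarith) (by linarith) (by linarith)] with x hx
      rw [_root_.sub_sub_cancel] at hx
      exact hx.le
    · refine half_step N hq hqα hα hκ hκ2 hκ4 hk4 (hk4' k4 hk4 le_rfl) hY hst hu0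
        (fun τ h1 h2 => (hP τ h1 (by linarith)).1) (hS2 _ (by linarith) (by linarith) _ hσ (by linarith)) ?_
      filter_upwards [hDv (t - κ * (t - s) / Y) t (by linarith) (by linarith) (by linarith)] with x hx
      rw [_root_.sub_sub_cancel] at hx
      exact hx.le
  have hind : ∀ n : ℕ, P (2 ^ n) → P 1 := by
    intro n
    induction n with
    | zero => intro h; simpa using h
    | succ n ih =>
      intro h
      apply ih
      have := hstep _ (one_le_pow₀ (by norm_num)) h
      rwa [pow_succ, mul_div_cancel_right₀ _ (by norm_num)] at this
  obtain ⟨M, hM⟩ := hbd s t1 hsp hst1 ht1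
  obtain ⟨n, hn⟩ : ∃ n : ℕ, M ≤ (2 ^ n / (t1 - s)) ^ α ∧ M ≤ (2 ^ n / (t1 - s)) ^ β := by
    have hl : Tendsto (fun n : ℕ => (2:ℝ) ^ n / (t1 - s)) atTop atTop :=
      (tendsto_pow_atTop_atTop_of_one_lt (by norm_num)).atTop_div_const (by linarith)
    exact ((((tendsto_rpow_atTop hα).comp hl).eventually_ge_atTop M).and
      (((tendsto_rpow_atTop hβ).comp hl).eventually_ge_atTop M)).exists
  have hPn : P (2 ^ n) := by
    intro t hst htt
    have hts : 0 < t - s := by linarith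
    have hts1 : 0 < t1 - s := by linarith
    have hle : (2:ℝ) ^ n / (t1 - s) ≤ 2 ^ n / (t - s) := by gcongr
    obtain ⟨ha, hb⟩ := hM t hst.le htt
    constructor
    · filter_upwards [ha] with x hx
      exact hx.trans (hn.1.trans (Real.rpow_le_rpow (by positivity) hle hα.le))
    · filter_upwards [hb] with x hx
      exact hx.trans (hn.2.trans (Real.rpow_le_rpow (by positivity) hle hβ.le))
  exact hind n hPn t1 hst1 le_rfl

lemma restart_of_sol (N : ℕ) {p T : ℝ} {u₀ : Euc N → ℝ} (hu₀ : Measurable u₀)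
    {u v : Euc N → ℝ → ℝ} (hv : Measurable (Function.uncurry v))
    (hD : ∀ t : ℝ, 0 < t → t < T → ∀ᵐ x ∂(volume : Measure (Euc N)), ENNReal.ofReal (u x t) =
      heatS N t u₀ x + ∫⁻ s in Set.Ioo 0 t, heatS N (t - s) (fun y => v y s ^ p) x) :
    ∀ s t, 0 < s → s < t → t < T → ∀ᵐ x, ENNReal.ofReal (u x t) =
      HS N (t - s) (fun y => ENNReal.ofReal (u y s)) x +
      ∫⁻ τ in Set.Ioo s t, HS N (t - τ) (fun y => ENNReal.ofReal (v y τ ^ p)) x := by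
  have hD' : ∀ t : ℝ, 0 < t → t < T → ∀ᵐ x ∂(volume : Measure (Euc N)), ENNReal.ofReal (u x t) =
      HS N t (fun y => ENNReal.ofReal (u₀ y)) x +
        ∫⁻ s in Set.Ioo 0 t, HS N (t - s) (fun y => ENNReal.ofReal (v y s ^ p)) x := by
    intro t ht htT
    filter_upwards [hD t ht htT] with x hx
    rw [hx, heatS_eq N ht]
    congr 1
    refine setLIntegral_congr_fun measurableSet_Ioo fun s hs => ?_
    exact heatS_eq N (by linarith [hs.2]) _ x
  intro s t hs hst htT
  have hF : Measurable (Function.uncurry fun (τ : ℝ) (y : Euc N) => ENNReal.ofReal (v y τ ^ p)) := by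
    have h1 : Measurable fun a : ℝ × Euc N => v a.2 a.1 :=
      hv.comp (f := fun a : ℝ × Euc N => (a.2, a.1)) (by fun_prop)
    exact ENNReal.measurable_ofReal.comp (h1.pow_const p)
  filter_upwards [hD' t (hs.trans hst) htT] with x hx
  rw [hx]
  exact duhamel_restart N (f := fun y => ENNReal.ofReal (u₀ y)) (by fun_prop) hF hs hst (hD' s hs (hst.trans htT)) x

lemma bdd_of_locBdd (N : ℕ) {T : ℝ} {u : Euc N → ℝ → ℝ} (h : LocBdd N (ENNReal.ofReal T) u) (s t : ℝ)
    (hs : 0 < s) (hst : s < t) (ht : t < T) :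
    ∃ M : ℝ, ∀ τ, s ≤ τ → τ ≤ t → ∀ᵐ x, u x τ ≤ M := by
  have hm : 0 < min s (T - t) := lt_min hs (by linarith)
  have h1 := min_le_left s (T - t)
  have h2 := min_le_right s (T - t)
  obtain ⟨M, hM⟩ := h (min s (T - t) / 2) (by positivity)
    ((ENNReal.ofReal_lt_ofReal_iff (by linarith)).2 (by linarith))
  refine ⟨M, fun τ h3 h4 => ?_⟩
  filter_upwards [hM τ (by linarith) (ENNReal.ofReal_le_ofReal (by linarith))] with x hx
  exact (le_abs_self _).trans hx

lemma one_side (N : ℕ) (p q : ℝ) (hp : 0 < p) (hq : 0 < q)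
    (hpq : 1 < p * q) (T : ℝ) (hT : 0 < T) (u₀ v₀ : Euc N → ℝ)
    (hu₀m : Measurable u₀) (hv₀m : Measurable v₀) (u v : Euc N → ℝ → ℝ)
    (hsol : IsSolSys N p q u₀ v₀ (ENNReal.ofReal T) u v)
    (hblow : Filter.limsup (fun t : ℝ =>
        essSup (fun x => ENNReal.ofReal (u x t)) (volume : Measure (Euc N)) +
          essSup (fun x => ENNReal.ofReal (v x t)) (volume : Measure (Euc N)))
        (nhdsWithin T (Set.Iio T)) = ⊤) (r : ℝ≥0∞) (hr : 1 < r)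
    (ha : (N : ℝ) / 2 * r⁻¹.toReal ≤ (p + 1) / (p * q - 1)) :
    Filter.limsup (fun t : ℝ =>
          ENNReal.ofReal ((T - t) ^ ((p + 1) / (p * q - 1) - (N : ℝ) / 2 * r⁻¹.toReal)) *
            ulocNorm N r (Real.sqrt (T - t)) (fun x => u x t))
          (nhdsWithin T (Set.Iio T)) ≠ 0 := by
  intro hlim
  obtain ⟨⟨hu0, hv0, hum, hvm, hub, hvb⟩, hD⟩ := hsol
  have hpq' : 0 < p * q - 1 := by linarith
  set α := (p + 1) / (p * q - 1) with hα
  set β := (q + 1) / (p * q - 1) with hβ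
  have hαp : 0 < α := by positivity
  have hβp : 0 < β := by positivity
  have hpβ : p * β = α + 1 := by rw [hα, hβ]; field_simp; ring
  have hqα : q * α = β + 1 := by
    have hne : p * q - 1 ≠ 0 := hpq'.ne'
    rw [hα, hβ, ← mul_div_assoc, div_add_one hne]
    congr 1
    ring
  have hRu := restart_of_sol N (p := p) (T := T) hu₀m (u := u) hvm
    fun t ht htT => (hD t ht ((ENNReal.ofReal_lt_ofReal_iff hT).2 htT)).1
  have hRv := restart_of_sol N (p := q) (T := T) hv₀m (u := v) hum
    fun t ht htT => (hD t ht ((ENNReal.ofReal_lt_ofReal_iff hT).2 htT)).2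
  have hAu := avg_of_limsup N r hr T α hT ha u hum hu0 hlim
  have hAv : Avg N T 2 β v := by
    refine avg_v N hp hpβ hv0 (fun s t h1 h2 h3 => ?_) (fun s t h1 h2 h3 => ?_) hAu
    · filter_upwards [hRu s t h1 h2 h3] with x hx
      rw [hx]; exact le_add_self
    · filter_upwards [hRv s t h1 h2 h3] with x hx
      rw [hx]; exact le_self_add
  have hAu2 : Avg N T 2 α u := by
    intro ε hε
    obtain ⟨T0, h0, h1, h2⟩ := hAu ε hε
    exact ⟨T0, h0, h1, fun s hs hsT σ hσ hσT => h2 s hs hsT σ hσ (by linarith)⟩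
  obtain ⟨s, hsT, hs⟩ := main_bdd N hp hq hαp hβp hpβ hqα hu0 hv0 hRu hRv
    (fun s t h1 h2 h3 => by
      obtain ⟨M1, hM1⟩ := bdd_of_locBdd N hub s t h1 h2 h3
      obtain ⟨M2, hM2⟩ := bdd_of_locBdd N hvb s t h1 h2 h3
      refine ⟨max M1 M2, fun τ h4 h5 => ⟨?_, ?_⟩⟩
      · filter_upwards [hM1 τ h4 h5] with x hx
        exact hx.trans (le_max_left _ _)
      · filter_upwards [hM2 τ h4 h5] with x hx
        exact hx.trans (le_max_right _ _))
    (sml_of_avg N T α u hum hAu2) (sml_of_avg N T β v hvm hAv)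
  have hle : Filter.limsup (fun t : ℝ =>
        essSup (fun x => ENNReal.ofReal (u x t)) (volume : Measure (Euc N)) +
          essSup (fun x => ENNReal.ofReal (v x t)) (volume : Measure (Euc N)))
        (nhdsWithin T (Set.Iio T)) ≤ ENNReal.ofReal ((1 / ((T - s) / 2)) ^ α) + ENNReal.ofReal ((1 / ((T - s) / 2)) ^ β) := by
    apply limsup_le_of_le
    · isBoundedDefault
    filter_upwards [Ioo_mem_nhdsLT (show (s + T) / 2 < T by linarith)] with t ht
    have h1 : (T - s) / 2 ≤ t - s := by linarith [ht.1]
    have h2 : 0 < T - s := by linarith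
    have h3 : 1 / (t - s) ≤ 1 / ((T - s) / 2) := by gcongr
    have h4 : 0 ≤ 1 / (t - s) := by
      apply div_nonneg <;> linarith
    obtain ⟨hx, hy⟩ := hs t (by linarith) ht.2
    apply add_le_add
    · refine essSup_le_of_ae_le _ ?_
      filter_upwards [hx] with x hx
      exact ENNReal.ofReal_le_ofReal (hx.trans (Real.rpow_le_rpow h4 h3 hαp.le))
    · refine essSup_le_of_ae_le _ ?_
      filter_upwards [hy] with x hx
      exact ENNReal.ofReal_le_ofReal (hx.trans (Real.rpow_le_rpow h4 h3 hβp.le))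
  rw [hblow] at hle
  exact absurd hle (not_le.2 (ENNReal.add_lt_top.2 ⟨ENNReal.ofReal_lt_top, ENNReal.ofReal_lt_top⟩))

lemma sol_symm (N : ℕ) (p q : ℝ) (T : ℝ≥0∞) (u₀ v₀ : Euc N → ℝ) (u v : Euc N → ℝ → ℝ)
    (h : IsSolSys N p q u₀ v₀ T u v) : IsSolSys N q p v₀ u₀ T v u := by
  obtain ⟨⟨h1, h2, h3, h4, h5, h6⟩, hD⟩ := h
  exact ⟨⟨h2, h1, h4, h3, h6, h5⟩, fun t ht htT => ⟨(hD t ht htT).2, (hD t ht htT).1⟩⟩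

lemma exponent_bound (N : ℕ) {A B l m : ℝ} (hA : 0 < A) (hB : 0 < B) (hl : 1 ≤ l)
    (hm : m = (N : ℝ) / 2 * (B / A)) (hm1 : 1 ≤ l * m) {r : ℝ≥0∞} (hr : ENNReal.ofReal (l * m) < r) :
    1 < r ∧ (N : ℝ) / 2 * r⁻¹.toReal ≤ A / B := by
  constructor
  · refine lt_of_le_of_lt ?_ hr
    rw [← ENNReal.ofReal_one]
    exact ENNReal.ofReal_le_ofReal hm1
  · by_cases hrt : r = ⊤
    · subst hrt
      simp
      positivity
    · have h1 : l * m < r.toReal := by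
        rw [← ENNReal.ofReal_toReal hrt] at hr
        exact (ENNReal.ofReal_lt_ofReal_iff_of_nonneg (by linarith)).1 hr
      have hm0 : 0 ≤ m := by rw [hm]; positivity
      have h2 : m ≤ r.toReal := by nlinarith
      have h3 : 0 < r.toReal := by linarith
      rw [ENNReal.toReal_inv, ← div_eq_mul_inv, div_le_iff₀ h3]
      have : A / B * m = (N : ℝ) / 2 := by rw [hm]; field_simp
      rw [← this]
      gcongr

lemma exists_c (L : ℝ≥0∞) (hL : L ≠ 0) : ∃ c : ℝ, 0 < c ∧ ENNReal.ofReal c ≤ L := by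
  obtain ⟨c, hc0, hc⟩ := ENNReal.lt_iff_exists_real_btwn.1 (pos_iff_ne_zero.2 hL)
  exact ⟨c, by simpa using hc.1, hc.2.le⟩

/-- Theorem 3.3 (ii): lower `limsup` estimates of the blow-up rate of each
component of the minimal solution of the system (S) in uniformly local weak Lebesgue norms. -/
theorem statement17 (N : ℕ) (hN : 1 ≤ N) (p q : ℝ) (hp : 0 ≤ p) (hq : 0 ≤ q)
    (hpq : 1 < p * q) (r₁s r₂s : ℝ)
    (hr₁def : r₁s = (N : ℝ) / 2 * ((p * q - 1) / (p + 1)))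
    (hr₂def : r₂s = (N : ℝ) / 2 * ((p * q - 1) / (q + 1)))
    (lstar : ℝ) (hl : 1 ≤ lstar) (hlmin : 1 ≤ lstar * min r₁s r₂s)
    (T : ℝ) (hT : 0 < T) (u₀ v₀ : Euc N → ℝ)
    (hu₀m : Measurable u₀) (hv₀m : Measurable v₀)
    (hu₀ : ∀ x, 0 ≤ u₀ x) (hv₀ : ∀ x, 0 ≤ v₀ x)
    (u v : Euc N → ℝ → ℝ)
    (hmin : IsMinSolSys N p q u₀ v₀ (ENNReal.ofReal T) u v)
    (hblow : Filter.limsup (fun t : ℝ =>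
        essSup (fun x => ENNReal.ofReal (u x t)) (volume : Measure (Euc N)) +
          essSup (fun x => ENNReal.ofReal (v x t)) (volume : Measure (Euc N)))
        (nhdsWithin T (Set.Iio T)) = ⊤) :
    ∀ r₁ r₂ : ℝ≥0∞, ENNReal.ofReal (lstar * r₁s) < r₁ → ENNReal.ofReal (lstar * r₂s) < r₂ →
      ∃ c₂ : ℝ, 0 < c₂ ∧
        ENNReal.ofReal c₂ ≤ Filter.limsup (fun t : ℝ =>
          ENNReal.ofReal ((T - t) ^ ((p + 1) / (p * q - 1) - (N : ℝ) / 2 * r₁⁻¹.toReal)) *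
            ulocNorm N r₁ (Real.sqrt (T - t)) (fun x => u x t))
          (nhdsWithin T (Set.Iio T)) ∧
        ENNReal.ofReal c₂ ≤ Filter.limsup (fun t : ℝ =>
          ENNReal.ofReal ((T - t) ^ ((q + 1) / (p * q - 1) - (N : ℝ) / 2 * r₂⁻¹.toReal)) *
            ulocNorm N r₂ (Real.sqrt (T - t)) (fun x => v x t))
          (nhdsWithin T (Set.Iio T)) := by
  intro r₁ r₂ hr₁ hr₂
  have hp' : 0 < p := by
    rcases hp.eq_or_lt with h | h
    · rw [← h] at hpq; linarith
    · exact h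
  have hq' : 0 < q := by
    rcases hq.eq_or_lt with h | h
    · rw [← h] at hpq; linarith
    · exact h
  have hl0 : 0 ≤ lstar := by linarith
  have b1 : 1 ≤ lstar * r₁s := hlmin.trans (mul_le_mul_of_nonneg_left (min_le_left _ _) hl0)
  have b2 : 1 ≤ lstar * r₂s := hlmin.trans (mul_le_mul_of_nonneg_left (min_le_right _ _) hl0)
  obtain ⟨h1, h2⟩ := exponent_bound N (by linarith) (by linarith) hl hr₁def b1 hr₁
  obtain ⟨h3, h4⟩ := exponent_bound N (by linarith) (by linarith) hl hr₂def b2 hr₂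
  have k1 := one_side N p q hp' hq' hpq T hT u₀ v₀ hu₀m hv₀m u v hmin.1 hblow r₁ h1 h2
  have k2 := one_side N q p hq' hp' (by linarith) T hT v₀ u₀ hv₀m hu₀m v u
    (sol_symm N p q _ u₀ v₀ u v hmin.1) (by simpa only [add_comm] using hblow) r₂ h3 (by rwa [mul_comm q p])
  rw [mul_comm q p] at k2
  obtain ⟨c, hc, hc'⟩ := exists_c _ k1
  obtain ⟨d, hd, hd'⟩ := exists_c _ k2
  exact ⟨min c d, lt_min hc hd, (ENNReal.ofReal_le_ofReal (min_le_left _ _)).trans hc',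
    (ENNReal.ofReal_le_ofReal (min_le_right _ _)).trans hd'⟩
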